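/- arXiv:0912.1034 — 13 statements merged into one kernel-verified Lean document; each statement's English description precedes it below -/
import Mathlib

section
/- Let L be a regular language over a finite alphabet Σ with quotient complexity κ(L) = n, where n ≥ 2. Then the prefix-closure of L has quotient complexity at most n, i.e., κ(≤L) ≤ n. -/
open List

/-- Left quotient of a language by a word: `L_w = {x | w ++ x ∈ L}`. -/
def leftQuot {α : Type*} (L : Set (List α)) (w : List α) : Set (List α) :=
  {x | w ++ x ∈ L}

/-- The set of all left quotients of `L`. -/
def quotients {α : Type*} (L : Set (List α)) : Set (Set (List α)) :=
  Set.range (leftQuot L)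

/-- Prefix-closure of a language. -/
def prefCl {α : Type*} (L : Set (List α)) : Set (List α) :=
  {u | ∃ w ∈ L, u <+: w}

/-- Taking left quotients commutes with prefix-closure: `w ++ x` is a prefix of a word of `L` exactly
when `x` is a prefix of a word of `L_w`. Hence every quotient of the prefix-closure of `L` is the
prefix-closure of a quotient of `L`, so there are at most as many of them. -/
theorem leftQuot_prefCl {α : Type*} (L : Set (List α)) (w : List α) :
    leftQuot (prefCl L) w = prefCl (leftQuot L w) := by
  ext x
  constructor
  · rintro ⟨_, hv, y, rfl⟩
    exact ⟨x ++ y, by simpa [leftQuot] using hv, y, rfl⟩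
  · rintro ⟨v, hv, hx⟩
    exact ⟨w ++ v, hv, (List.prefix_append_right_inj w).mpr hx⟩

theorem prefix_closure_complexity {α : Type*} [Finite α] (L : Set (List α)) (n : ℕ)
    (hn : 2 ≤ n) (hL : (quotients L).encard = n) :
    (quotients (prefCl L)).encard ≤ n := by
  have h : quotients (prefCl L) = prefCl '' quotients L := by
    unfold quotients
    rw [← Set.range_comp]
    exact congrArg Set.range (funext (leftQuot_prefCl L))
  rw [h, ← hL]
  exact Set.encard_image_le _ _
end

section
/- Let L be a regular language over a finite alphabet Σ with quotient complexity κ(L) = n, where n ≥ 2, and suppose L does not have the empty quotient (i.e., L_w ≠ ∅ for every word w). Then the suffix-closure of L has quotient complexity at most 2^n − 1, i.e., κ(⪯L) ≤ 2^n − 1. -/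
/-!
The quotient of the suffix-closure by `w` is `⋃ v, L_{vw}`, a union of a nonempty set of quotients
of `L`. Hence there are at most as many such quotients as there are nonempty subsets of the
`n`-element set of quotients of `L`, namely `2 ^ n - 1`.
-/

open List

/-- Suffix-closure of a language. -/
def sufCl {α : Type*} (L : Set (List α)) : Set (List α) :=
  {u | ∃ w ∈ L, u <:+ w}

theorem leftQuot_sufCl {α : Type*} (L : Set (List α)) (w : List α) :
    leftQuot (sufCl L) w = ⋃₀ Set.range (fun v => leftQuot L (v ++ w)) := by
  ext x
  simp only [leftQuot, sufCl, Set.mem_ofPred_eq, Set.sUnion_range, Set.mem_iUnion,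
    List.append_assoc]
  constructor
  · rintro ⟨_, hu, v, rfl⟩
    exact ⟨v, hu⟩
  · rintro ⟨v, hv⟩
    exact ⟨_, hv, v, rfl⟩

theorem quotients_sufCl_subset {α : Type*} (L : Set (List α)) :
    quotients (sufCl L) ⊆ Set.sUnion '' (𝒫 (quotients L) \ {∅}) := by
  rintro _ ⟨w, rfl⟩
  refine ⟨Set.range (fun v => leftQuot L (v ++ w)), ⟨?_, ?_⟩, (leftQuot_sufCl L w).symm⟩
  · rintro _ ⟨v, rfl⟩
    exact ⟨v ++ w, rfl⟩
  · exact (Set.range_nonempty _).ne_empty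

theorem suffix_closure_complexity_no_empty_quotient {α : Type*} [Finite α]
    (L : Set (List α)) (n : ℕ) (hn : 2 ≤ n) (hL : (quotients L).encard = n)
    (hno : ∀ w : List α, leftQuot L w ≠ ∅) :
    (quotients (sufCl L)).encard ≤ ((2 ^ n - 1 : ℕ) : ℕ∞) := by
  refine (Set.encard_le_encard (quotients_sufCl_subset L)).trans
    ((Set.encard_image_le _ _).trans ?_)
  have hfin : (quotients L).Finite := Set.finite_of_encard_eq_coe hL
  have hcard : (quotients L).ncard = n := by simp [Set.ncard, hL]
  have hpow : (𝒫 (quotients L) \ {∅}).Finite := hfin.finite_subsets.subset Set.sdiff_subset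
  rw [← hpow.cast_ncard_eq,
    Set.ncard_sdiff_singleton_of_mem (Set.empty_subset _), Set.ncard_powerset _ hfin, hcard]
end

section
/- Let L be a regular language over a finite alphabet Σ with quotient complexity κ(L) = n, where n ≥ 2. Then the factor-closure of L has quotient complexity at most 2^(n−1), i.e., κ(⊑L) ≤ 2^(n−1). -/
/-!
The left quotient of `facCl L` by `w` consists of the words `v` such that `x ++ w ++ v ++ y ∈ L`
for some `x` and `y`, so it is determined by the set of those left quotients of `L` by words
`x ++ w` which are nonempty: an empty quotient contributes no `v`. If `∅` is a quotient of `L`,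
there are `n - 1` nonempty quotients, hence at most `2 ^ (n - 1)` such sets. If `∅` is not a
quotient of `L`, every word is a prefix of a word of `L`, so `facCl L` is the set of all words and
has a single quotient.
-/

open List

/-- Factor-closure of a language. -/
def facCl {α : Type*} (L : Set (List α)) : Set (List α) :=
  {u | ∃ w ∈ L, u <:+: w}

/-- The union of the prefix-closures of the languages in `S`. -/
def prefUnion {α : Type*} (S : Set (Set (List α))) : Set (List α) :=
  {v | ∃ Q ∈ S, ∃ y, v ++ y ∈ Q}

theorem mem_facCl_iff {α : Type*} (L : Set (List α)) (u : List α) :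
    u ∈ facCl L ↔ ∃ x y, x ++ u ++ y ∈ L := by
  constructor
  · rintro ⟨w, hw, x, y, rfl⟩
    exact ⟨x, y, hw⟩
  · rintro ⟨x, y, h⟩
    exact ⟨_, h, x, y, rfl⟩

theorem quotients_facCl_subset {α : Type*} (L : Set (List α)) :
    quotients (facCl L) ⊆ prefUnion '' (𝒫 (quotients L \ {∅})) := by
  rintro _ ⟨w, rfl⟩
  refine ⟨{Q | ∃ x, Q = leftQuot L (x ++ w)} \ {∅}, ?_, ?_⟩
  · rintro _ ⟨⟨x, rfl⟩, hne⟩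
    exact ⟨⟨_, rfl⟩, hne⟩
  · ext v
    change _ ↔ w ++ v ∈ facCl L
    rw [mem_facCl_iff]
    constructor
    · rintro ⟨_, ⟨⟨x, rfl⟩, -⟩, y, hy⟩
      exact ⟨x, y, by simpa [leftQuot] using hy⟩
    · rintro ⟨x, y, hxy⟩
      have hy : v ++ y ∈ leftQuot L (x ++ w) := by simpa [leftQuot] using hxy
      exact ⟨_, ⟨⟨x, rfl⟩, Set.Nonempty.ne_empty ⟨_, hy⟩⟩, y, hy⟩

theorem facCl_eq_univ {α : Type*} (L : Set (List α)) (h : ∅ ∉ quotients L) :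
    facCl L = Set.univ := by
  refine Set.eq_univ_of_forall fun u => (mem_facCl_iff L u).2 ?_
  obtain ⟨y, hy⟩ : (leftQuot L u).Nonempty :=
    Set.nonempty_iff_ne_empty.2 fun h0 => h ⟨u, h0⟩
  exact ⟨[], y, hy⟩

theorem factor_closure_complexity {α : Type*} [Finite α] (L : Set (List α)) (n : ℕ)
    (hn : 2 ≤ n) (hL : (quotients L).encard = n) :
    (quotients (facCl L)).encard ≤ ((2 ^ (n - 1) : ℕ) : ℕ∞) := by
  by_cases h : ∅ ∈ quotients L
  · have hfin : (quotients L).Finite := Set.finite_of_encard_eq_coe hL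
    have hT : (quotients L \ {∅}).Finite := hfin.sdiff
    have hcard : (quotients L \ {∅}).ncard = n - 1 := by
      rw [Set.ncard_sdiff_singleton_of_mem h, Set.ncard, hL, ENat.toNat_natCast]
    calc (quotients (facCl L)).encard
        ≤ (prefUnion '' (𝒫 (quotients L \ {∅}))).encard :=
          Set.encard_le_encard (quotients_facCl_subset L)
      _ ≤ (𝒫 (quotients L \ {∅})).encard := Set.encard_image_le _ _
      _ = ((2 ^ (n - 1) : ℕ) : ℕ∞) := by
          have hP : (𝒫 (quotients L \ {∅})).Finite := hT.finite_subsets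
          rw [← hP.cast_ncard_eq, ← hcard, ← Set.ncard_powerset _ hT]
  · have hsub : quotients (facCl L) ⊆ {Set.univ} := by
      rintro _ ⟨w, rfl⟩
      rw [facCl_eq_univ L h]
      rfl
    calc (quotients (facCl L)).encard
        ≤ ({Set.univ} : Set (Set (List α))).encard := Set.encard_le_encard hsub
      _ = ((1 : ℕ) : ℕ∞) := by simp
      _ ≤ _ := Nat.cast_le.2 Nat.one_le_two_pow
end

section
/- Let L be a regular language over a finite alphabet Σ with quotient complexity κ(L) = n, where n ≥ 2. Then the subword-closure of L has quotient complexity at most 2^(n−2) + 1, i.e., κ(⋐L) ≤ 2^(n−2) + 1. -/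
/-!
For a word `w` let `R w` (`superQuots L w` below) be the set of quotients `L_v` of `L` with `w` a
subword of `v`. Splitting a superword of `w ++ x` into a superword of `w` and one of `x` shows
that the quotient of the closure `subwCl L` by `w` is the union of the closures of the members of
`R w`, so it depends on `R w` only, and the empty quotient contributes nothing to this union.

* If `∅` is not a quotient of `L`, every word is a prefix of a word of `L`, so `subwCl L` contains
  all words and has a single quotient.

* Otherwise `∅` and `L` are two distinct quotients, since `n ≥ 2` rules out `L = ∅`. If `L ∈ R w`,
  the quotient of `subwCl L` by `w` contains `subwCl L`, hence equals it, because a subword-closed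
  language contains all of its quotients. If `L ∉ R w`, the quotient is determined by `R w \ {∅}`,
  a subset of the `n - 2` quotients of `L` other than `∅` and `L`. This gives at most `2 ^ (n - 2)
  + 1` quotients.
-/

open List

/-- Subword-(subsequence-)closure of a language. -/
def subwCl {α : Type*} (L : Set (List α)) : Set (List α) :=
  {u | ∃ w ∈ L, u <+ w}

/-- The quotients of `L` by the superwords of `w`: the states that can be reached on reading `w`
once arbitrary letters may be inserted. -/
def superQuots {α : Type*} (L : Set (List α)) (w : List α) : Set (Set (List α)) :=
  {K | ∃ v, w <+ v ∧ leftQuot L v = K}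

lemma leftQuot_subwCl {α : Type*} (L : Set (List α)) (w : List α) :
    leftQuot (subwCl L) w = ⋃ K ∈ superQuots L w, subwCl K := by
  ext x
  simp only [Set.mem_iUnion, exists_prop]
  constructor
  · rintro ⟨y, hy, hs⟩
    obtain ⟨v, z, rfl, hv, hz⟩ := List.append_sublist_iff.1 hs
    exact ⟨leftQuot L v, ⟨v, hv, rfl⟩, z, hy, hz⟩
  · rintro ⟨_, ⟨v, hv, rfl⟩, z, hz, hxz⟩
    exact ⟨v ++ z, hz, hv.append hxz⟩

lemma leftQuot_subwCl_subset {α : Type*} (L : Set (List α)) (w : List α) :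
    leftQuot (subwCl L) w ⊆ subwCl L := by
  rintro x ⟨y, hy, hs⟩
  exact ⟨y, hy, (List.sublist_append_right w x).trans hs⟩

lemma biUnion_subwCl_diff_empty {α : Type*} (S : Set (Set (List α))) :
    ⋃ K ∈ S \ {∅}, subwCl K = ⋃ K ∈ S, subwCl K := by
  ext x
  simp only [Set.mem_iUnion, exists_prop]
  constructor
  · rintro ⟨K, hK, hx⟩
    exact ⟨K, hK.1, hx⟩
  · rintro ⟨K, hK, y, hy, hx⟩
    refine ⟨K, ⟨hK, ?_⟩, y, hy, hx⟩
    rintro rfl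
    exact hy

lemma self_mem_quotients {α : Type*} (L : Set (List α)) : L ∈ quotients L := ⟨[], rfl⟩

lemma subwCl_eq_univ {α : Type*} {L : Set (List α)} (h : ∅ ∉ quotients L) :
    subwCl L = Set.univ := by
  refine Set.eq_univ_of_forall fun u => ?_
  obtain ⟨x, hx⟩ : (leftQuot L u).Nonempty :=
    Set.nonempty_iff_ne_empty.2 fun he => h ⟨u, he⟩
  exact ⟨u ++ x, hx, List.sublist_append_left u x⟩

lemma quotients_subwCl_subset {α : Type*} (L : Set (List α)) :
    quotients (subwCl L) ⊆ insert (subwCl L)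
      ((fun S : Set (Set (List α)) => ⋃ K ∈ S, subwCl K) '' 𝒫 (quotients L \ {∅, L})) := by
  rintro _ ⟨w, rfl⟩
  by_cases h : L ∈ superQuots L w
  · left
    refine (leftQuot_subwCl_subset L w).antisymm ?_
    rw [leftQuot_subwCl]
    exact Set.subset_biUnion_of_mem (u := subwCl) h
  · right
    refine ⟨superQuots L w \ {∅}, ?_, ?_⟩
    · rintro K ⟨hK, hne⟩
      refine ⟨?_, ?_⟩
      · obtain ⟨v, -, rfl⟩ := hK
        exact ⟨v, rfl⟩
      · rintro (rfl | rfl)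
        · exact hne rfl
        · exact h hK
    · exact (biUnion_subwCl_diff_empty _).trans (leftQuot_subwCl L w).symm

theorem subword_closure_complexity {α : Type*} [Finite α] (L : Set (List α)) (n : ℕ)
    (hn : 2 ≤ n) (hL : (quotients L).encard = n) :
    (quotients (subwCl L)).encard ≤ ((2 ^ (n - 2) + 1 : ℕ) : ℕ∞) := by
  by_cases he : ∅ ∈ quotients L
  · have hfin : (quotients L).Finite := Set.finite_of_encard_eq_coe hL
    -- `∅` has a single quotient, so `2 ≤ n` forces `L` and `∅` to be distinct.
    have hLe : (∅ : Set (List α)) ≠ L := by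
      rintro rfl
      have hq : quotients (∅ : Set (List α)) ⊆ {∅} := by
        rintro _ ⟨w, rfl⟩
        rfl
      have h1 := Set.encard_le_encard hq
      rw [hL, Set.encard_singleton] at h1
      have : n ≤ 1 := by exact_mod_cast h1
      omega
    have hsub : ({∅, L} : Set (Set (List α))) ⊆ quotients L :=
      Set.insert_subset he (Set.singleton_subset_iff.2 (self_mem_quotients L))
    have hcard : (quotients L \ {∅, L}).ncard = n - 2 := by
      rw [Set.ncard_sdiff hsub, Set.ncard_pair hLe, Set.ncard, hL, ENat.toNat_natCast]
    have hfin' : (quotients L \ {∅, L}).Finite := hfin.sdiff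
    have hpow : (𝒫 (quotients L \ {∅, L})).encard = ((2 ^ (n - 2) : ℕ) : ℕ∞) := by
      rw [← hfin'.powerset.cast_ncard_eq, Set.ncard_powerset _ hfin', hcard]
    calc (quotients (subwCl L)).encard
        ≤ _ := Set.encard_le_encard (quotients_subwCl_subset L)
      _ ≤ _ := Set.encard_insert_le _ _
      _ ≤ (𝒫 (quotients L \ {∅, L})).encard + 1 := by
          gcongr
          exact Set.encard_image_le _ _
      _ = _ := by rw [hpow]; norm_cast
  · have hq : quotients (subwCl L) ⊆ {Set.univ} := by
      rintro _ ⟨w, rfl⟩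
      rw [subwCl_eq_univ he]
      rfl
    refine (Set.encard_le_encard hq).trans ?_
    rw [Set.encard_singleton]
    exact_mod_cast Nat.le_add_left 1 _
end

section
/- Let n ≥ 3, let Σ be an alphabet with exactly n − 2 letters, and let L = ⋃_{a ∈ Σ} a·(Σ \ {a})*, the language of all words over Σ in which the first letter occurs exactly once. Then κ(L) = n and the subword-closure of L has quotient complexity exactly 2^(n−2) + 1, i.e., κ(⋐L) = 2^(n−2) + 1. -/
/-!
Let `Σ` have `k = n - 2` letters.

The quotients of `L` are `L` itself, the languages `(Σ \ {a})*` for the `k` letters `a`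
(quotients by words of `L` starting with `a`), and `∅`; they are pairwise distinct, so there are
`k + 2` of them.

For the subword-closure, a nonempty word `b :: t` belongs to it iff some letter is missing from `t`
(`cons_mem_subwCl`). Hence its quotient by `b :: w` is the set `missing T` of words `x` that miss
some letter outside the set `T` of letters of `w`. Every `T ⊆ Σ` arises, and distinct `T` give
distinct languages, since a word with letter set `Σ \ T` lies in `missing T'` iff `T ⊄ T'`.
Finally the closure itself contains a word using every letter, while no `missing T` does.
This gives `2 ^ k + 1` quotients.
-/

open List

/-- The words in which the first letter occurs exactly once. -/
def firstOnce (α : Type*) : Set (List α) :=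
  {w | ∃ a : α, ∃ v : List α, w = a :: v ∧ a ∉ v}

/-- The words that miss at least one letter outside `T`. -/
def missing {α : Type*} (T : Finset α) : Set (List α) :=
  {x | ∃ c, c ∉ T ∧ c ∉ x}

lemma cons_mem_firstOnce {α : Type*} (b : α) (t : List α) :
    b :: t ∈ firstOnce α ↔ b ∉ t := by
  simp [firstOnce]

lemma quotients_firstOnce {α : Type*} [Nonempty α] :
    quotients (firstOnce α) =
      insert (firstOnce α) (insert ∅ (Set.range fun a : α => {v : List α | a ∉ v})) := by
  ext S
  constructor
  · rintro ⟨w, rfl⟩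
    cases w with
    | nil => exact Or.inl rfl
    | cons b t =>
      right
      by_cases hb : b ∈ t
      · left
        ext x
        simp [leftQuot, cons_mem_firstOnce, hb]
      · right
        refine ⟨b, ?_⟩
        ext x
        simp [leftQuot, cons_mem_firstOnce, hb]
  · rintro (rfl | rfl | ⟨a, rfl⟩)
    · exact ⟨[], rfl⟩
    · obtain ⟨a⟩ := ‹Nonempty α›
      refine ⟨[a, a], ?_⟩
      ext x
      simp [leftQuot, cons_mem_firstOnce]
    · refine ⟨[a], ?_⟩
      ext x
      simp [leftQuot, cons_mem_firstOnce]

lemma encard_quotients_firstOnce {α : Type*} [Fintype α] [Nonempty α] :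
    (quotients (firstOnce α)).encard = ((Fintype.card α + 2 : ℕ) : ℕ∞) := by
  have hinj : Function.Injective fun a : α => {v : List α | a ∉ v} := by
    intro a b h
    have h1 := Set.ext_iff.mp h [b]
    simpa using h1
  have h1 : (∅ : Set (List α)) ∉ Set.range fun a : α => {v : List α | a ∉ v} := by
    rintro ⟨a, h⟩
    have h2 := Set.ext_iff.mp h []
    simp at h2
  have h2 : firstOnce α ∉
      insert ∅ (Set.range fun a : α => {v : List α | a ∉ v}) := by
    rintro (h | ⟨a, h⟩)
    · obtain ⟨a⟩ := ‹Nonempty α›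
      have h3 := Set.ext_iff.mp h [a]
      simp [cons_mem_firstOnce] at h3
    · have h3 := Set.ext_iff.mp h []
      simp [firstOnce] at h3
  rw [quotients_firstOnce, Set.encard_insert_of_notMem h2, Set.encard_insert_of_notMem h1,
    ← Set.image_univ, hinj.encard_image, Set.encard_univ, ENat.card_eq_coe_fintype_card]
  push_cast
  rw [add_assoc, one_add_one_eq_two]

lemma cons_mem_subwCl {α : Type*} (b : α) (t : List α) :
    b :: t ∈ subwCl (firstOnce α) ↔ ∃ c, c ∉ t := by
  constructor
  · rintro ⟨_, ⟨a, v, rfl, ha⟩, h⟩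
    exact ⟨a, fun hat => ha (h.tail.subset hat)⟩
  · rintro ⟨c, hc⟩
    by_cases hcb : c = b
    · subst hcb
      exact ⟨_, ⟨c, t, rfl, hc⟩, List.Sublist.refl _⟩
    · exact ⟨c :: b :: t, ⟨c, _, rfl, by simp [hc, hcb]⟩, List.sublist_cons_self _ _⟩

lemma quotients_subwCl {α : Type*} [Nonempty α] :
    quotients (subwCl (firstOnce α)) =
      insert (subwCl (firstOnce α)) (Set.range (missing (α := α))) := by
  classical
  ext S
  constructor
  · rintro ⟨w, rfl⟩
    cases w with
    | nil => exact Or.inl rfl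
    | cons b t =>
      refine Or.inr ⟨t.toFinset, ?_⟩
      ext x
      simp [leftQuot, cons_mem_subwCl, missing]
  · rintro (rfl | ⟨T, rfl⟩)
    · exact ⟨[], rfl⟩
    · obtain ⟨b⟩ := ‹Nonempty α›
      refine ⟨b :: T.toList, ?_⟩
      ext x
      simp [leftQuot, cons_mem_subwCl, missing]

lemma missing_injective {α : Type*} [Fintype α] : Function.Injective (missing (α := α)) := by
  classical
  have key : ∀ T T' : Finset α, missing T = missing T' → T ⊆ T' := by
    intro T T' h c hcT
    by_contra hc
    -- a word with letter set `Tᶜ` separates the two languages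
    have h1 : (Tᶜ).toList ∈ missing T' := ⟨c, hc, by simp [hcT]⟩
    rw [← h] at h1
    obtain ⟨d, hd, hd'⟩ := h1
    simp [hd] at hd'
  exact fun T T' h => (key T T' h).antisymm (key T' T h.symm)

lemma encard_quotients_subwCl {α : Type*} [Fintype α] [Nonempty α] :
    (quotients (subwCl (firstOnce α))).encard = ((2 ^ Fintype.card α + 1 : ℕ) : ℕ∞) := by
  classical
  have h1 : subwCl (firstOnce α) ∉ Set.range (missing (α := α)) := by
    rintro ⟨T, h⟩
    obtain ⟨a⟩ := ‹Nonempty α›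
    have h2 : a :: (Finset.univ.erase a).toList ∈ subwCl (firstOnce α) :=
      (cons_mem_subwCl _ _).2 ⟨a, by simp⟩
    rw [← h] at h2
    obtain ⟨c, -, hc⟩ := h2
    simp at hc
  rw [quotients_subwCl, Set.encard_insert_of_notMem h1, ← Set.image_univ,
    missing_injective.encard_image, Set.encard_univ, ENat.card_eq_coe_fintype_card,
    Fintype.card_finset]
  push_cast
  rfl

theorem subword_closure_tightness {α : Type*} [Fintype α] (n : ℕ) (hn : 3 ≤ n)
    (hcard : Fintype.card α = n - 2)
    (L : Set (List α))
    (hLdef : L = {w : List α | ∃ a : α, ∃ v : List α, w = a :: v ∧ a ∉ v}) :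
    (quotients L).encard = n ∧
      (quotients (subwCl L)).encard = ((2 ^ (n - 2) + 1 : ℕ) : ℕ∞) := by
  have hne : Nonempty α := Fintype.card_pos_iff.mp (by omega)
  change L = firstOnce α at hLdef
  subst hLdef
  refine ⟨?_, ?_⟩
  · rw [encard_quotients_firstOnce, hcard, Nat.sub_add_cancel (by omega)]
  · rw [encard_quotients_subwCl, hcard]
end

section
/- Let K and L be prefix-closed languages over a finite alphabet Σ with quotient complexities κ(K) = m and κ(L) = n, where m ≥ 2 and n ≥ 2. Then the product (concatenation) satisfies κ(KL) ≤ (m + 1)·2^(n−2). -/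
/-!
The quotient of `K L` by `w` is `K_w L ∪ ⋃ L_v`, the union being over the factorizations `w = u v`
with `u ∈ K` (`leftQuot_lprod`). Since `K` and `L` are prefix-closed and have at least two
quotients, each is nonempty and has `∅` among its quotients (`basic_of_two_le`), and a nonempty
quotient of `K` contains the empty word, because `K_w ≠ ∅` forces `w ∈ K`.

* If `K_w ≠ ∅`, then `L ⊆ K_w L`, so the quotients `∅` and `L` of `L` may be left out of the union.
  There are at most `(m - 1) * 2 ^ (n - 2)` quotients of `K L` of this form.
* If `K_w = ∅`, the quotient is a union of nonempty quotients of `L`: at most `2 ^ (n - 1)` of them.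

The two bounds add up to `(m + 1) * 2 ^ (n - 2)`.
-/

open List

/-- A language is prefix-closed if it contains all prefixes of its words. -/
def IsPrefixClosed {α : Type*} (L : Set (List α)) : Prop :=
  ∀ w ∈ L, ∀ u, u <+: w → u ∈ L

/-- Product (concatenation) of two languages. -/
def lprod {α : Type*} (K L : Set (List α)) : Set (List α) :=
  {w | ∃ u ∈ K, ∃ v ∈ L, w = u ++ v}

/-- The quotients `L_v` of `L` over all factorizations `w = u ++ v` with `u ∈ K`. -/
def suffixQuots {α : Type*} (K L : Set (List α)) (w : List α) : Set (Set (List α)) :=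
  {A | ∃ u ∈ K, ∃ v, w = u ++ v ∧ A = leftQuot L v}

theorem suffixQuots_subset {α : Type*} (K L : Set (List α)) (w : List α) :
    suffixQuots K L w ⊆ quotients L := by
  rintro A ⟨u, -, v, -, rfl⟩
  exact ⟨v, rfl⟩

/-- A word of `K L` beginning with `w` splits into its two factors either at or after the end of
`w`, or within `w`; these two cases give the two terms of the union. -/
theorem leftQuot_lprod {α : Type*} (K L : Set (List α)) (w : List α) :
    leftQuot (lprod K L) w = lprod (leftQuot K w) L ∪ ⋃₀ suffixQuots K L w := by
  ext x
  constructor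
  · rintro ⟨u, hu, v, hv, h⟩
    rcases List.append_eq_append_iff.1 h with ⟨a, rfl, rfl⟩ | ⟨c, rfl, rfl⟩
    · exact Or.inl ⟨a, hu, v, hv, rfl⟩
    · exact Or.inr ⟨_, ⟨u, hu, c, rfl, rfl⟩, hv⟩
  · rintro (⟨a, ha, v, hv, rfl⟩ | ⟨_, ⟨u, hu, v, rfl, rfl⟩, hx⟩)
    · exact ⟨w ++ a, ha, v, hv, by simp⟩
    · exact ⟨u, hu, v ++ x, hx, by simp⟩

/-- The languages `∅` and `Σ*` have only one quotient each, so any other prefix-closed language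
contains the empty word and misses some word `w`; the quotient by `w` is then empty. -/
theorem basic_of_two_le {α : Type*} {L : Set (List α)} {n : ℕ} (hn : 2 ≤ n)
    (hcl : IsPrefixClosed L) (h : (quotients L).encard = n) :
    [] ∈ L ∧ ∅ ∈ quotients L := by
  have hnt : (quotients L).Nontrivial := by
    rw [← Set.one_lt_encard_iff_nontrivial, h]
    exact_mod_cast hn
  constructor
  · by_contra h0
    have hL : ∀ w, w ∉ L := fun w hw => h0 (hcl w hw [] List.nil_prefix)
    obtain ⟨_, ⟨a, rfl⟩, _, ⟨b, rfl⟩, hne⟩ := hnt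
    exact hne (by ext x; simp [leftQuot, hL])
  · by_contra h0
    have hL : ∀ w, w ∈ L := by
      intro w
      by_contra hw
      refine h0 ⟨w, ?_⟩
      ext x
      simpa [leftQuot] using fun hx => hw (hcl _ hx w (List.prefix_append w x))
    obtain ⟨_, ⟨a, rfl⟩, _, ⟨b, rfl⟩, hne⟩ := hnt
    exact hne (by ext x; simp [leftQuot, hL])

theorem prefix_closed_product {α : Type*} [Finite α] (K L : Set (List α)) (m n : ℕ)
    (hm : 2 ≤ m) (hn : 2 ≤ n)
    (hKcl : IsPrefixClosed K) (hLcl : IsPrefixClosed L)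
    (hK : (quotients K).encard = m) (hL : (quotients L).encard = n) :
    (quotients (lprod K L)).encard ≤ (((m + 1) * 2 ^ (n - 2) : ℕ) : ℕ∞) := by
  obtain ⟨-, hKe⟩ := basic_of_two_le hm hKcl hK
  obtain ⟨hL0, hLe⟩ := basic_of_two_le hn hLcl hL
  have hKf : (quotients K).Finite := Set.finite_of_encard_eq_coe hK
  have hLf : (quotients L).Finite := Set.finite_of_encard_eq_coe hL
  set P := quotients K \ {∅} with hP
  set Q := quotients L \ {∅} with hQ
  set R := Q \ {L} with hR
  have hPf : P.Finite := hKf.sdiff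
  have hQf : Q.Finite := hLf.sdiff
  have hRf : R.Finite := hQf.sdiff
  have hLQ : L ∈ Q := ⟨⟨[], rfl⟩, fun h => by
    rw [Set.mem_singleton_iff] at h
    simp [h] at hL0⟩
  have cP : P.ncard = m - 1 := by
    rw [hP, Set.ncard_sdiff_singleton_of_mem hKe, Set.ncard, hK, ENat.toNat_natCast]
  have cQ : Q.ncard = n - 1 := by
    rw [hQ, Set.ncard_sdiff_singleton_of_mem hLe, Set.ncard, hL, ENat.toNat_natCast]
  have cR : R.ncard = n - 2 := by
    rw [hR, Set.ncard_sdiff_singleton_of_mem hLQ, cQ]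
    omega
  set T₁ := (fun p : Set (List α) × Set (Set (List α)) => lprod p.1 L ∪ ⋃₀ p.2) '' (P ×ˢ 𝒫 R)
    with hT₁
  set T₂ := Set.sUnion '' (𝒫 Q) with hT₂
  have f₁ : (P ×ˢ 𝒫 R).Finite := hPf.prod hRf.powerset
  have f₂ : (𝒫 Q).Finite := hQf.powerset
  have c₁ : T₁.ncard ≤ (m - 1) * 2 ^ (n - 2) := by
    refine (Set.ncard_image_le f₁).trans ?_
    rw [Set.ncard_prod, Set.ncard_powerset R hRf, cP, cR]
  have c₂ : T₂.ncard ≤ 2 ^ (n - 1) := by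
    refine (Set.ncard_image_le f₂).trans ?_
    rw [Set.ncard_powerset Q hQf, cQ]
  have hsub : quotients (lprod K L) ⊆ T₁ ∪ T₂ := by
    rintro _ ⟨w, rfl⟩
    have hS := suffixQuots_subset K L w
    rw [leftQuot_lprod]
    by_cases hw : leftQuot K w = ∅
    · right
      refine ⟨suffixQuots K L w \ {∅}, Set.sdiff_subset_sdiff_left hS, ?_⟩
      rw [Set.sUnion_sdiff_singleton_empty, hw]
      ext x
      simp [lprod]
    · left
      have hwK : [] ∈ leftQuot K w := by
        obtain ⟨x, hx⟩ := Set.nonempty_iff_ne_empty.2 hw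
        exact hKcl _ hx _ (by simp)
      have hLsub : L ⊆ lprod (leftQuot K w) L := fun v hv => ⟨[], hwK, v, hv, rfl⟩
      refine ⟨(leftQuot K w, (suffixQuots K L w \ {∅}) \ {L}), ⟨⟨⟨w, rfl⟩, hw⟩,
        Set.sdiff_subset_sdiff_left (Set.sdiff_subset_sdiff_left hS)⟩, ?_⟩
      apply Set.Subset.antisymm
      · exact Set.union_subset_union_right _
          (Set.sUnion_subset_sUnion (Set.sdiff_subset.trans Set.sdiff_subset))
      · refine Set.union_subset Set.subset_union_left ?_
        rintro x ⟨A, hA, hx⟩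
        by_cases hAL : A = L
        · exact Or.inl (hLsub (hAL ▸ hx))
        · exact Or.inr ⟨A, ⟨⟨hA, Set.nonempty_iff_ne_empty.1 ⟨x, hx⟩⟩, hAL⟩, hx⟩
  have hfin : (T₁ ∪ T₂).Finite := (f₁.image _).union (f₂.image _)
  refine (Set.encard_le_encard hsub).trans ?_
  rw [← hfin.cast_ncard_eq]
  norm_cast
  refine (Set.ncard_union_le T₁ T₂).trans ((add_le_add c₁ c₂).trans (le_of_eq ?_))
  obtain ⟨a, rfl⟩ := Nat.exists_eq_add_of_le hm
  obtain ⟨b, rfl⟩ := Nat.exists_eq_add_of_le hn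
  rw [show 2 + a - 1 = a + 1 by omega, show 2 + b - 1 = b + 1 by omega,
    show 2 + b - 2 = b by omega]
  ring
end

section
/- Let K and L be suffix-closed languages over a finite alphabet Σ with quotient complexities κ(K) = m and κ(L) = n, where m ≥ 2 and n ≥ 2, and let k be the number of accepting quotients of K (distinct left quotients K_w that contain the empty word). Then the product satisfies κ(KL) ≤ (m − k)·n + k. -/
/-!
A word `x` lies in the quotient of `KL` by `w` iff it lies in `K_w L`, or in `L_v` for some
factorization `w = uv` with `u ∈ K`. As `L` is suffix-closed, `L_v` grows when `v` is replaced by a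
suffix, so the union of these `L_v` is the single quotient `L_v` with `v` shortest, and
`(KL)_w = K_w L ∪ L_v`. A factorization exists because `ε ∈ K`, the language `K` being nonempty.

If `K_w` is accepting then `v = ε` and `L_v = L ⊆ K_w L`, so `(KL)_w = K_w L` depends only on `K_w`;
this gives at most `k` quotients. The other `m - k` quotients `K_w`, each paired with one of the
`n` quotients `L_v`, give at most `(m - k) n` more.
-/

open List

/-- A language is suffix-closed if it contains all suffixes of its words. -/
def IsSuffixClosed {α : Type*} (L : Set (List α)) : Prop :=
  ∀ w ∈ L, ∀ u, u <:+ w → u ∈ L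

theorem mem_leftQuot_lprod {α : Type*} (K L : Set (List α)) (w x : List α) :
    x ∈ leftQuot (lprod K L) w ↔
      x ∈ lprod (leftQuot K w) L ∨ ∃ u ∈ K, ∃ v, w = u ++ v ∧ x ∈ leftQuot L v := by
  simp only [leftQuot, lprod, Set.mem_ofPred_eq]
  constructor
  · rintro ⟨u, hu, v, hv, h⟩
    rcases List.append_eq_append_iff.1 h with ⟨a, rfl, rfl⟩ | ⟨c, rfl, rfl⟩
    · exact Or.inl ⟨a, hu, v, hv, rfl⟩
    · exact Or.inr ⟨u, hu, c, rfl, hv⟩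
  · rintro (⟨u, hu, v, hv, rfl⟩ | ⟨u, hu, v, rfl, hx⟩)
    · exact ⟨w ++ u, hu, v, hv, by simp⟩
    · exact ⟨u, hu, v ++ x, hx, by simp⟩

theorem leftQuot_anti {α : Type*} {L : Set (List α)} (hL : IsSuffixClosed L) {v v' : List α}
    (h : v <:+ v') : leftQuot L v' ⊆ leftQuot L v := by
  obtain ⟨t, rfl⟩ := h
  intro x hx
  exact hL _ hx _ ⟨t, by simp⟩

/-- When `w ∈ K`, the quotient of the product by `w` is determined by `K_w` alone. -/
theorem leftQuot_lprod_of_mem {α : Type*} {K L : Set (List α)} (hL : IsSuffixClosed L)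
    {w : List α} (hw : w ∈ K) : leftQuot (lprod K L) w = lprod (leftQuot K w) L := by
  ext x
  rw [mem_leftQuot_lprod]
  refine ⟨?_, Or.inl⟩
  rintro (h | ⟨u, -, v, -, hx⟩)
  · exact h
  · exact ⟨[], by simpa [leftQuot] using hw, x, leftQuot_anti hL List.nil_suffix hx, rfl⟩

/-- When `ε ∈ K`, the quotient of the product by `w` is `K_w L ∪ L_v`, where `v` is the shortest
suffix of `w` whose removal leaves a word of `K`. -/
theorem exists_leftQuot_lprod {α : Type*} {K L : Set (List α)} (hL : IsSuffixClosed L)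
    (hK : [] ∈ K) (w : List α) :
    ∃ v, leftQuot (lprod K L) w = lprod (leftQuot K w) L ∪ leftQuot L v := by
  have hne : {v | ∃ u ∈ K, w = u ++ v}.Nonempty := ⟨w, [], hK, rfl⟩
  obtain ⟨v, ⟨u, hu, huv⟩, hmin⟩ :=
    (measure (List.length (α := α))).wf.has_min _ hne
  refine ⟨v, ?_⟩
  ext x
  rw [mem_leftQuot_lprod, Set.mem_union]
  refine or_congr_right ⟨?_, fun hx => ⟨u, hu, v, huv, hx⟩⟩
  rintro ⟨u', hu', v', huv', hx⟩
  have hle : v.length ≤ v'.length := not_lt.1 (hmin v' ⟨u', hu', huv'⟩)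
  exact leftQuot_anti hL
    (List.suffix_of_suffix_length_le ⟨u, huv.symm⟩ ⟨u', huv'.symm⟩ hle) hx

theorem suffix_closed_product {α : Type*} [Finite α] (K L : Set (List α)) (m n k : ℕ)
    (hm : 2 ≤ m) (hn : 2 ≤ n)
    (hKcl : IsSuffixClosed K) (hLcl : IsSuffixClosed L)
    (hK : (quotients K).encard = m) (hL : (quotients L).encard = n)
    (hk : {Q | Q ∈ quotients K ∧ [] ∈ Q}.encard = k) :
    (quotients (lprod K L)).encard ≤ (((m - k) * n + k : ℕ) : ℕ∞) := by
  -- The empty language has a single quotient, so `m ≥ 2` makes `K` nonempty.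
  have hnil : [] ∈ K := by
    by_contra h
    have hemp : ∀ w, w ∉ K := fun w hw => h (hKcl w hw [] List.nil_suffix)
    have hsub : quotients K ⊆ {∅} := by
      rintro _ ⟨w, rfl⟩
      exact Set.eq_empty_of_forall_notMem fun x hx => hemp _ hx
    have h1 := Set.encard_le_encard hsub
    rw [hK, Set.encard_singleton] at h1
    have : m ≤ 1 := by exact_mod_cast h1
    omega
  set A := {Q | Q ∈ quotients K ∧ [] ∈ Q} with hA
  have hcover : quotients (lprod K L) ⊆
      (fun p : Set (List α) × Set (List α) => lprod p.1 L ∪ p.2) ''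
        ((quotients K \ A) ×ˢ quotients L) ∪ (fun Q => lprod Q L) '' A := by
    rintro _ ⟨w, rfl⟩
    by_cases hw : w ∈ K
    · exact Or.inr ⟨leftQuot K w, ⟨⟨w, rfl⟩, by simpa [leftQuot] using hw⟩,
        (leftQuot_lprod_of_mem hLcl hw).symm⟩
    · obtain ⟨v, hv⟩ := exists_leftQuot_lprod hLcl hnil w
      exact Or.inl ⟨(leftQuot K w, leftQuot L v),
        ⟨⟨⟨w, rfl⟩, fun h => hw (by simpa [leftQuot] using h.2)⟩, ⟨v, rfl⟩⟩, hv.symm⟩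
  have hAfin : A.Finite := Set.finite_of_encard_eq_coe hk
  have hdiff : (quotients K \ A).encard = ((m - k : ℕ) : ℕ∞) := by
    rw [Set.encard_sdiff (fun Q hQ => hQ.1) hAfin, hK, hk, ENat.natCast_sub]
  calc (quotients (lprod K L)).encard
      ≤ ((quotients K \ A) ×ˢ quotients L).encard + A.encard :=
        (Set.encard_le_encard hcover).trans <| (Set.encard_union_le _ _).trans <|
          add_le_add (Set.encard_image_le _ _) (Set.encard_image_le _ _)
    _ = (((m - k) * n + k : ℕ) : ℕ∞) := by
        rw [Set.encard_prod, hdiff, hL, hk]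
        push_cast
        rfl
end

section
/- Let m ≥ 2 and n ≥ 2, let Σ = {a, b} be a two-letter alphabet, and let K = {w ∈ Σ* : a^(m−1) is not a subword of w} and L = {w ∈ Σ* : b^(n−1) is not a subword of w} (equivalently, words with at most m − 2 occurrences of a, respectively at most n − 2 occurrences of b). Then K and L are subword-closed, κ(K) = m, κ(L) = n, and the product satisfies κ(KL) = m + n − 1. -/
/-!
All three languages consist of the words avoiding one fixed word as a subword: `K` avoids
`0 ^ (m - 1)`, `L` avoids `1 ^ (n - 1)`, and `K L` avoids `0 ^ (m - 1) 1 ^ (n - 1)`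
(`lprod_avoid`). The last fact comes from cutting a word just before its `(m - 1)`-st `0`: this
letter is useless for embedding `1 ^ (n - 1)`, so it may be moved to the right factor.

Avoiding `z` has exactly `z.length + 1` quotients (`encard_quotients_avoid`): reading a letter
either removes the first letter of `z` or does nothing, so the quotients are the languages avoiding
the suffixes of `z`, and these are distinct because a word can be recovered, by antisymmetry of the
subword order, from the language avoiding it.
-/

open List

/-- A language is subword-closed if it contains all subsequences of its words. -/
def IsSubwordClosed {α : Type*} (L : Set (List α)) : Prop :=
  ∀ w ∈ L, ∀ u, u <+ w → u ∈ L

/-- The words that do not contain `z` as a (scattered) subword. -/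
def avoid {α : Type*} (z : List α) : Set (List α) := {w | ¬ z <+ w}

theorem avoid_injective {α : Type*} : Function.Injective (avoid (α := α)) := by
  intro s t h
  have hs : s ∉ avoid t := h ▸ fun hs => hs (Sublist.refl s)
  have ht : t ∉ avoid s := h ▸ fun ht => ht (Sublist.refl t)
  exact Sublist.antisymm (not_not.mp ht) (not_not.mp hs)

theorem isSubwordClosed_avoid {α : Type*} (z : List α) : IsSubwordClosed (avoid z) :=
  fun _ hw _ hu h => hw (h.trans hu)

theorem cons_sublist_cons_of_ne {α : Type*} {c d : α} (h : d ≠ c) {z w : List α} :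
    d :: z <+ c :: w ↔ d :: z <+ w := by
  rw [sublist_cons_iff]
  simp [h]

/-- Every quotient of `avoid z` avoids a suffix of `z`. -/
theorem exists_leftQuot_avoid {α : Type*} (w z : List α) :
    ∃ i ≤ z.length, avoid (z.drop i) = leftQuot (avoid z) w := by
  induction w generalizing z with
  | nil => exact ⟨0, Nat.zero_le _, rfl⟩
  | cons c w ih =>
    cases z with
    | nil => exact ⟨0, le_rfl, by ext x; simp [avoid, leftQuot]⟩
    | cons d z =>
      by_cases h : d = c
      · subst h
        obtain ⟨i, hi, hq⟩ := ih z
        refine ⟨i + 1, by simpa using hi, ?_⟩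
        rw [drop_succ_cons, hq]
        ext x
        simp [avoid, leftQuot]
      · obtain ⟨i, hi, hq⟩ := ih (d :: z)
        refine ⟨i, hi, ?_⟩
        rw [hq]
        ext x
        simp [avoid, leftQuot, cons_sublist_cons_of_ne h]

theorem leftQuot_avoid_append {α : Type*} (s t : List α) :
    leftQuot (avoid (s ++ t)) s = avoid t := by
  ext x
  simp [avoid, leftQuot]

theorem encard_quotients_avoid {α : Type*} (z : List α) :
    (quotients (avoid z)).encard = ((z.length + 1 : ℕ) : ℕ∞) := by
  have hq : quotients (avoid z) =
      (fun i => avoid (z.drop i)) '' (Finset.range (z.length + 1) : Set ℕ) := by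
    ext Q
    constructor
    · rintro ⟨w, rfl⟩
      obtain ⟨i, hi, h⟩ := exists_leftQuot_avoid w z
      exact ⟨i, by simpa [Nat.lt_succ_iff] using hi, h⟩
    · rintro ⟨i, -, rfl⟩
      refine ⟨z.take i, ?_⟩
      have := leftQuot_avoid_append (z.take i) (z.drop i)
      rwa [take_append_drop] at this
  have hinj : Set.InjOn (fun i => avoid (z.drop i)) (Finset.range (z.length + 1) : Set ℕ) := by
    intro i hi j hj h
    have hl := congrArg List.length (avoid_injective h)
    simp only [Finset.coe_range, Set.mem_Iio, length_drop] at hi hj hl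
    omega
  rw [hq, hinj.encard_image, Set.encard_coe_eq_coe_finsetCard, Finset.card_range]

/-- A word avoiding `a ^ (k + 1) e y` with `e ≠ a` splits into a word avoiding `a ^ (k + 1)` and
a word avoiding `e y`. -/
theorem avoid_append_subset_lprod {α : Type*} {a e : α} (hea : e ≠ a) (y w : List α) (k : ℕ)
    (hw : w ∈ avoid (replicate (k + 1) a ++ e :: y)) :
    w ∈ lprod (avoid (replicate (k + 1) a)) (avoid (e :: y)) := by
  induction w generalizing k with
  | nil => exact ⟨[], by simp [avoid, replicate_succ], [], by simp [avoid], rfl⟩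
  | cons c w ih =>
    by_cases hc : a = c
    · subst hc
      cases k with
      | zero =>
        -- This `a` would complete `a ^ (k + 1)`, so it goes to the right factor, where it does not
        -- help to embed `e y`.
        refine ⟨[], by simp [avoid], a :: w, ?_, rfl⟩
        simpa [avoid, cons_sublist_cons_of_ne hea] using hw
      | succ k =>
        obtain ⟨u, hu, v, hv, rfl⟩ := ih k (by
          rw [replicate_succ, cons_append] at hw
          exact fun h => hw (h.cons_cons a))
        refine ⟨a :: u, ?_, v, hv, rfl⟩
        intro h
        rw [replicate_succ, cons_sublist_cons] at h
        exact hu h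
    · obtain ⟨u, hu, v, hv, rfl⟩ := ih k fun h => hw (h.cons c)
      refine ⟨c :: u, ?_, v, hv, rfl⟩
      intro h
      rw [replicate_succ, cons_sublist_cons_of_ne hc, ← replicate_succ] at h
      exact hu h

theorem lprod_avoid_subset {α : Type*} (x y : List α) :
    lprod (avoid x) (avoid y) ⊆ avoid (x ++ y) := by
  rintro _ ⟨u, hu, v, hv, rfl⟩ h
  obtain ⟨l₁, l₂, he, h₁, h₂⟩ := sublist_append_iff.mp h
  rcases append_eq_append_iff.mp he with ⟨t, rfl, rfl⟩ | ⟨t, rfl, rfl⟩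
  · exact hu ((sublist_append_left _ _).trans h₁)
  · exact hv ((sublist_append_right _ _).trans h₂)

theorem lprod_avoid {α : Type*} {a e : α} (hea : e ≠ a) (y : List α) (k : ℕ) :
    lprod (avoid (replicate (k + 1) a)) (avoid (e :: y)) =
      avoid (replicate (k + 1) a ++ e :: y) :=
  (lprod_avoid_subset _ _).antisymm fun w hw => avoid_append_subset_lprod hea y w k hw

theorem subword_closed_product_tightness (m n : ℕ) (hm : 2 ≤ m) (hn : 2 ≤ n)
    (K L : Set (List (Fin 2)))
    (hKdef : K = {w : List (Fin 2) | ¬ List.replicate (m - 1) (0 : Fin 2) <+ w})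
    (hLdef : L = {w : List (Fin 2) | ¬ List.replicate (n - 1) (1 : Fin 2) <+ w}) :
    IsSubwordClosed K ∧ IsSubwordClosed L ∧
      (quotients K).encard = m ∧ (quotients L).encard = n ∧
      (quotients (lprod K L)).encard = ((m + n - 1 : ℕ) : ℕ∞) := by
  obtain ⟨k, rfl⟩ := Nat.exists_eq_add_of_le' hm
  obtain ⟨l, rfl⟩ := Nat.exists_eq_add_of_le' hn
  change K = avoid (replicate (k + 1) 0) at hKdef
  change L = avoid (replicate (l + 1) 1) at hLdef
  subst hKdef hLdef
  refine ⟨isSubwordClosed_avoid _, isSubwordClosed_avoid _, ?_, ?_, ?_⟩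
  · rw [encard_quotients_avoid, length_replicate]
  · rw [encard_quotients_avoid, length_replicate]
  · rw [replicate_succ (n := l), lprod_avoid (by decide), encard_quotients_avoid]
    congr 1
    simp
    omega
end

section
/- Let L be a prefix-closed language over a finite alphabet Σ with quotient complexity κ(L) = n, where n ≥ 2. Then the Kleene star satisfies κ(L*) ≤ 2^(n−2) + 1. -/
/-!
As `n ≥ 2`, the language `L` is neither empty nor the set of all words, so `[] ∈ L`, and `∅` and `L`
are two distinct quotients of `L`. In a factorisation of `w ++ x` into words of `L`, the boundary
between `w` and `x` falls inside or at an end of one factor, so `(L*)_w` is the union of the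
languages `L_v L*` over all `w = u ++ v` with `u ∈ L*` (`append_mem_lstar_iff`).
If `w ∉ L*`, then
`(L*)_w = ∅`, because `L*` is prefix-closed. If `w ∈ L*`, then `u = w`, `v = []` contributes `L L*`,
while the terms with `L_v = ∅` contribute nothing; hence `(L*)_w` is determined by a set of
quotients of `L` other than `∅` and `L`, and there are at most `2 ^ (n - 2)` such sets.
-/

open List

/-- `i`-th power of a language. -/
def lpow {α : Type*} (L : Set (List α)) : ℕ → Set (List α)
  | 0 => {[]}
  | n + 1 => lprod L (lpow L n)

/-- Kleene star of a language: union of all powers `L ^ i`, `i ≥ 0`. -/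
def lstar {α : Type*} (L : Set (List α)) : Set (List α) :=
  ⋃ i : ℕ, lpow L i

section

variable {α : Type*} {L : Set (List α)}

theorem nil_mem_lstar : [] ∈ lstar L := Set.mem_iUnion.2 ⟨0, rfl⟩

theorem append_mem_lstar {u v : List α} (hu : u ∈ L) (hv : v ∈ lstar L) : u ++ v ∈ lstar L := by
  obtain ⟨i, hi⟩ := Set.mem_iUnion.1 hv
  exact Set.mem_iUnion.2 ⟨i + 1, u, hu, v, hi, rfl⟩

theorem lstar_append {u v : List α} (hu : u ∈ lstar L) (hv : v ∈ lstar L) :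
    u ++ v ∈ lstar L := by
  obtain ⟨i, hi⟩ := Set.mem_iUnion.1 hu
  induction i generalizing u with
  | zero =>
    obtain rfl : u = [] := hi
    simpa using hv
  | succ i ih =>
    obtain ⟨a, ha, b, hb, rfl⟩ := hi
    rw [List.append_assoc]
    exact append_mem_lstar ha (ih (Set.mem_iUnion.2 ⟨i, hb⟩) hb)

theorem mem_lstar_of_mem {u : List α} (hu : u ∈ L) : u ∈ lstar L := by
  simpa using append_mem_lstar hu nil_mem_lstar

/-- The left quotient of `L*` by `w` is the union of the `L_v L*` over all `w = u ++ v` with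
`u ∈ L*`. -/
theorem append_mem_lstar_iff (hnil : [] ∈ L) {w x : List α} :
    w ++ x ∈ lstar L ↔
      ∃ u v, w = u ++ v ∧ u ∈ lstar L ∧ x ∈ lprod (leftQuot L v) (lstar L) := by
  constructor
  · intro h
    obtain ⟨i, hi⟩ := Set.mem_iUnion.1 h
    clear h
    induction i generalizing w with
    | zero =>
      obtain ⟨rfl, rfl⟩ : w = [] ∧ x = [] := List.append_eq_nil_iff.1 hi
      exact ⟨[], [], rfl, nil_mem_lstar, [], hnil, [], nil_mem_lstar, rfl⟩
    | succ i ih =>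
      obtain ⟨a, ha, b, hb, hab⟩ := hi
      rcases List.append_eq_append_iff.1 hab with ⟨c, rfl, rfl⟩ | ⟨c, rfl, rfl⟩
      · exact ⟨[], w, rfl, nil_mem_lstar, c, ha, b, Set.mem_iUnion.2 ⟨i, hb⟩, rfl⟩
      · obtain ⟨u, v, rfl, hu, hx⟩ := ih hb
        exact ⟨a ++ u, v, by simp, append_mem_lstar ha hu, hx⟩
  · rintro ⟨u, v, rfl, hu, y, hy, z, hz, rfl⟩
    have h : u ++ ((v ++ y) ++ z) ∈ lstar L := lstar_append hu (append_mem_lstar hy hz)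
    simpa using h

theorem mem_lstar_of_append (hcl : IsPrefixClosed L) (hnil : [] ∈ L) {w x : List α}
    (h : w ++ x ∈ lstar L) : w ∈ lstar L := by
  obtain ⟨u, v, rfl, hu, y, hy, -⟩ := (append_mem_lstar_iff hnil).1 h
  exact lstar_append hu (mem_lstar_of_mem (hcl _ hy _ (List.prefix_append v y)))

/-- Every quotient of `L*` is either empty or of the form `⋃ K ∈ {L} ∪ T, K L*` for a set `T` of
quotients of `L` other than `∅` and `L`. -/
theorem quotients_lstar_subset (hcl : IsPrefixClosed L) (hnil : [] ∈ L) :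
    quotients (lstar L) ⊆ insert ∅ ((fun T : Set (Set (List α)) =>
      ⋃ K ∈ insert L T, lprod K (lstar L)) '' (quotients L \ {∅, L}).powerset) := by
  rintro _ ⟨w, rfl⟩
  by_cases hw : w ∈ lstar L
  · refine Or.inr ⟨{K | ∃ u v, w = u ++ v ∧ u ∈ lstar L ∧ K = leftQuot L v} \ {∅, L}, ?_, ?_⟩
    · rintro _ ⟨⟨u, v, -, -, rfl⟩, h⟩
      exact ⟨⟨v, rfl⟩, h⟩
    · ext x
      simp only [Set.mem_iUnion, exists_prop]
      refine Iff.trans ?_ (append_mem_lstar_iff hnil).symm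
      constructor
      · rintro ⟨K, rfl | ⟨⟨u, v, huv, hu, rfl⟩, -⟩, hx⟩
        · exact ⟨w, [], by simp, hw, hx⟩
        · exact ⟨u, v, huv, hu, hx⟩
      · rintro ⟨u, v, huv, hu, hx⟩
        refine ⟨leftQuot L v, ?_, hx⟩
        by_cases hL : leftQuot L v = L
        · exact Or.inl hL
        · refine Or.inr ⟨⟨u, v, huv, hu, rfl⟩, ?_⟩
          obtain ⟨y, hy, -⟩ := hx
          rintro (h | h)
          · exact (h ▸ hy : y ∈ (∅ : Set (List α)))
          · exact hL h
  · refine Or.inl (Set.eq_empty_of_forall_notMem fun x hx => hw ?_)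
    exact mem_lstar_of_append hcl hnil hx

end

theorem prefix_closed_star {α : Type*} [Finite α] (L : Set (List α)) (n : ℕ)
    (hn : 2 ≤ n) (hLcl : IsPrefixClosed L) (hL : (quotients L).encard = n) :
    (quotients (lstar L)).encard ≤ ((2 ^ (n - 2) + 1 : ℕ) : ℕ∞) := by
  -- Having two quotients, `L` is neither `∅` nor the set of all words.
  have hnt : (quotients L).Nontrivial := by
    rw [← Set.one_lt_encard_iff_nontrivial, hL]
    exact_mod_cast hn
  obtain ⟨w, hw⟩ : ∃ w, w ∉ L := by
    by_contra! h
    obtain ⟨_, ⟨u, rfl⟩, _, ⟨v, rfl⟩, huv⟩ := hnt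
    exact huv (Set.ext fun x => ⟨fun _ => h _, fun _ => h _⟩)
  obtain ⟨l, hl⟩ : ∃ l, l ∈ L := by
    by_contra! h
    obtain ⟨_, ⟨u, rfl⟩, _, ⟨v, rfl⟩, huv⟩ := hnt
    exact huv (Set.ext fun x => ⟨fun hx => (h _ hx).elim, fun hx => (h _ hx).elim⟩)
  have hnil : [] ∈ L := hLcl l hl [] List.nil_prefix
  have hself : L ∈ quotients L := ⟨[], rfl⟩
  have hempty : ∅ ∈ quotients L :=
    ⟨w, Set.eq_empty_of_forall_notMem fun x hx => hw (hLcl _ hx w (List.prefix_append w x))⟩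
  have hne : ∅ ≠ L := fun h => by simp [← h] at hl
  have hfin : (quotients L).Finite := Set.finite_of_encard_eq_coe hL
  have hcard : (quotients L \ {∅, L}).ncard = n - 2 := by
    rw [Set.ncard_sdiff (by rintro _ (rfl | rfl) <;> assumption), Set.ncard_pair hne,
      Set.ncard, hL, ENat.toNat_natCast]
  have hfin' : (quotients L \ {∅, L}).Finite := hfin.sdiff
  calc (quotients (lstar L)).encard
      ≤ _ := Set.encard_le_encard (quotients_lstar_subset hLcl hnil)
    _ ≤ _ := Set.encard_insert_le _ _
    _ ≤ (quotients L \ {∅, L}).powerset.encard + 1 := by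
      gcongr
      exact Set.encard_image_le _ _
    _ = ((2 ^ (n - 2) + 1 : ℕ) : ℕ∞) := by
      rw [← hfin'.powerset.cast_ncard_eq, Set.ncard_powerset _ hfin', hcard]
      push_cast
      rfl
end

section
/- Let L be a factor-closed regular language over a finite alphabet Σ (i.e., κ(L) is finite). Then the Kleene star satisfies κ(L*) ≤ 2. -/
/-!
The star of a factor-closed language `L` is the set of all words over the subalphabet
`{a | [a] ∈ L}` (`mem_lstar_iff`): a letter of a word of `L` is a factor of that word, and
conversely a word whose letters all lie in `L` is a product of one-letter words of `L`.
Hence the quotient of `L*` by `w` is `L*` if all letters of `w` lie in that subalphabet, and `∅`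
otherwise. This covers `L = ∅` too, where the subalphabet is empty and `L* = {ε}`.
-/

open List

/-- A language is factor-closed if it contains all factors of its words. -/
def IsFactorClosed {α : Type*} (L : Set (List α)) : Prop :=
  ∀ w ∈ L, ∀ u, u <:+: w → u ∈ L

theorem mem_lstar_iff {α : Type*} {L : Set (List α)} (hL : IsFactorClosed L) (w : List α) :
    w ∈ lstar L ↔ ∀ a ∈ w, [a] ∈ L := by
  simp only [lstar, Set.mem_iUnion]
  constructor
  · rintro ⟨n, hn⟩
    induction n generalizing w with
    | zero =>
      obtain rfl : w = [] := hn
      simp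
    | succ n ih =>
      obtain ⟨u, hu, v, hv, rfl⟩ := hn
      refine List.forall_mem_append.2 ⟨fun a ha => ?_, ih v hv⟩
      obtain ⟨s, t, rfl⟩ := List.append_of_mem ha
      exact hL _ hu [a] ⟨s, t, by simp⟩
  · intro h
    induction w with
    | nil => exact ⟨0, rfl⟩
    | cons a w ih =>
      obtain ⟨ha, hw⟩ := List.forall_mem_cons.1 h
      obtain ⟨n, hn⟩ := ih hw
      exact ⟨n + 1, [a], ha, w, hn, rfl⟩

theorem factor_closed_star {α : Type*} [Finite α] (L : Set (List α))
    (hLcl : IsFactorClosed L) (hreg : (quotients L).Finite) :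
    (quotients (lstar L)).encard ≤ 2 := by
  exact le_trans (Set.encard_le_encard (t := {lstar L, ∅}) (by
    rintro _ ⟨w, rfl⟩
    simp only [Set.mem_insert_iff, Set.mem_singleton_iff]
    by_cases hw : ∀ a ∈ w, [a] ∈ L
    · left
      ext x
      simp only [leftQuot, Set.mem_ofPred_eq, mem_lstar_iff hLcl, List.forall_mem_append]
      exact and_iff_right hw
    · right
      ext x
      simp only [leftQuot, Set.mem_ofPred_eq, mem_lstar_iff hLcl, List.forall_mem_append,
        Set.mem_empty_iff_false, iff_false]
      exact fun h => hw h.1)) ((Set.encard_insert_le _ _).trans (by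
    rw [Set.encard_singleton, one_add_one_eq_two]))
end

section
/- Let L be a prefix-closed language over a finite alphabet Σ with quotient complexity κ(L) = n, where n ≥ 2. Then the reversal satisfies κ(L^R) ≤ 2^(n−1). -/
/-!
The quotient of the reversal by `w` is `{x | wᴿ ∈ L_{xᴿ}}`, so it is determined by the set of those
quotients of `L` that contain `wᴿ`. The empty set never belongs to such a set. When `L` is
prefix-closed and has at least two quotients, the empty set is itself a quotient: `L` misses some
word, and no extension of that word can lie in `L`. Hence there are at most as many quotients of the
reversal as subsets of an `(n - 1)`-element set.
-/

open List

/-- Reversal of a language. -/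
def lrev {α : Type*} (L : Set (List α)) : Set (List α) :=
  List.reverse '' L

/-- A prefix-closed language other than the full one has an empty quotient, by any word outside
it. -/
lemma empty_mem_quotients {α : Type*} {L : Set (List α)} (hLcl : IsPrefixClosed L)
    (hL : L ≠ Set.univ) : ∅ ∈ quotients L := by
  obtain ⟨w, hw⟩ := (Set.ne_univ_iff_exists_notMem L).1 hL
  refine ⟨w, Set.eq_empty_iff_forall_notMem.2 fun x hx => hw ?_⟩
  exact hLcl _ hx _ (List.prefix_append w x)

lemma quotients_univ_encard {α : Type*} :
    (quotients (Set.univ : Set (List α))).encard = 1 := by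
  have : quotients (Set.univ : Set (List α)) = {Set.univ} := by
    unfold quotients
    rw [show leftQuot (Set.univ : Set (List α)) = fun _ => Set.univ from rfl, Set.range_const]
  rw [this, Set.encard_singleton]

lemma mem_leftQuot_lrev {α : Type*} (L : Set (List α)) (w x : List α) :
    x ∈ leftQuot (lrev L) w ↔ w.reverse ∈ leftQuot L x.reverse := by
  simp only [leftQuot, lrev, Set.mem_setOf_eq, Set.mem_image]
  constructor
  · rintro ⟨y, hy, h⟩
    rw [← List.reverse_append, ← h, List.reverse_reverse]
    exact hy
  · intro h
    exact ⟨_, h, by simp⟩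

/-- Every quotient of the reversal is read off from a set of nonempty quotients of `L`. -/
lemma quotients_lrev_subset {α : Type*} (L : Set (List α)) :
    quotients (lrev L) ⊆
      (fun S : Set (Set (List α)) => {x : List α | leftQuot L x.reverse ∈ S}) ''
        (𝒫 (quotients L \ {∅})) := by
  rintro _ ⟨w, rfl⟩
  refine ⟨{K | K ∈ quotients L ∧ w.reverse ∈ K}, ?_, ?_⟩
  · rintro K ⟨hK, hwK⟩
    refine ⟨hK, ?_⟩
    rintro rfl
    exact hwK
  · ext x
    rw [mem_leftQuot_lrev]
    exact ⟨fun h => h.2, fun h => ⟨⟨_, rfl⟩, h⟩⟩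

theorem prefix_closed_reversal {α : Type*} [Finite α] (L : Set (List α)) (n : ℕ)
    (hn : 2 ≤ n) (hLcl : IsPrefixClosed L) (hL : (quotients L).encard = n) :
    (quotients (lrev L)).encard ≤ ((2 ^ (n - 1) : ℕ) : ℕ∞) := by
  have hne : L ≠ Set.univ := by
    rintro rfl
    rw [quotients_univ_encard] at hL
    have h1 : 1 = n := by exact_mod_cast hL
    omega
  have hfin : (quotients L).Finite := Set.finite_of_encard_eq_coe hL
  have hn' : (quotients L).ncard = n := by rw [Set.ncard_def, hL, ENat.toNat_coe]
  have hcard : (quotients L \ {∅}).ncard = n - 1 := by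
    rw [Set.ncard_sdiff_singleton_of_mem (empty_mem_quotients hLcl hne), hn']
  have hfin' : (𝒫 (quotients L \ {∅})).Finite := hfin.sdiff.powerset
  calc (quotients (lrev L)).encard
      ≤ (𝒫 (quotients L \ {∅})).encard :=
        (Set.encard_le_encard (quotients_lrev_subset L)).trans (Set.encard_image_le _ _)
    _ = ((2 ^ (n - 1) : ℕ) : ℕ∞) := by
        rw [← hfin'.cast_ncard_eq, Set.ncard_powerset _ hfin.sdiff, hcard]
end

section
/- Let L be a factor-closed language over a finite alphabet Σ with quotient complexity κ(L) = n, where n ≥ 2. Then the reversal satisfies κ(L^R) ≤ 2^(n−2) + 1. -/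
/-!
A quotient of the reversal by `w` is determined by the set `S` of those quotients of `L` that
contain `w.reverse`. When `L` has at least two quotients, factor-closedness makes `∅` and `L` two
distinct quotients, the least and the greatest one under inclusion. Hence `∅ ∉ S`, and `L ∈ S`
unless `S` is empty, so apart from `S = ∅` only the membership in `S` of the remaining `n - 2`
quotients is free. This leaves at most `2 ^ (n - 2) + 1` possibilities.
-/

open List

/-- Every quotient of a factor-closed language is contained in the language, since suffixes are
factors. -/
lemma leftQuot_subset {α : Type*} {L : Set (List α)} (hL : IsFactorClosed L) (w : List α) :
    leftQuot L w ⊆ L :=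
  fun x hx => hL (w ++ x) hx x (List.suffix_append w x).isInfix

/-- The quotient by a word outside a factor-closed language is empty, since prefixes are
factors. -/
lemma leftQuot_eq_empty {α : Type*} {L : Set (List α)} (hL : IsFactorClosed L) {w : List α}
    (hw : w ∉ L) : leftQuot L w = ∅ :=
  Set.eq_empty_of_forall_notMem fun x hx =>
    hw (hL (w ++ x) hx w (List.prefix_append w x).isInfix)

/-- Only the empty language and the full language have a single quotient among the factor-closed
ones; otherwise `L ≠ ∅` and some word lies outside `L`, giving the quotient `∅`. -/
lemma nonempty_and_empty_mem_quotients {α : Type*} {L : Set (List α)} (hL : IsFactorClosed L)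
    (h : 1 < (quotients L).encard) : L ≠ ∅ ∧ ∅ ∈ quotients L := by
  obtain ⟨_, _, ⟨u, rfl⟩, ⟨v, rfl⟩, huv⟩ := Set.one_lt_encard_iff.1 h
  constructor
  · rintro rfl
    exact huv (by simp [leftQuot])
  · by_contra hne
    have hall : ∀ w, w ∈ L := fun w => by
      by_contra hw
      exact hne ⟨w, leftQuot_eq_empty hL hw⟩
    exact huv (by simp [leftQuot, hall])

/-- The quotient of the reversal by `w` is recovered from the set of quotients of `L` that contain
`w.reverse`. -/
lemma leftQuot_lrev {α : Type*} (L : Set (List α)) (w : List α) :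
    leftQuot (lrev L) w =
      {x | leftQuot L x.reverse ∈ {q ∈ quotients L | w.reverse ∈ q}} := by
  ext x
  simp [leftQuot, lrev, quotients, Set.mem_image]

theorem factor_closed_reversal {α : Type*} [Finite α] (L : Set (List α)) (n : ℕ)
    (hn : 2 ≤ n) (hLcl : IsFactorClosed L) (hL : (quotients L).encard = n) :
    (quotients (lrev L)).encard ≤ ((2 ^ (n - 2) + 1 : ℕ) : ℕ∞) := by
  have h_one : 1 < (quotients L).encard := by
    rw [hL]
    exact_mod_cast hn
  obtain ⟨hne, hemp⟩ := nonempty_and_empty_mem_quotients hLcl h_one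
  set M : Set (Set (List α)) := quotients L \ {∅, L} with hM
  have hfin : (quotients L).Finite := Set.finite_of_encard_eq_coe hL
  have hMcard : M.ncard = n - 2 := by
    have hsub : {∅, L} ⊆ quotients L :=
      Set.insert_subset hemp (Set.singleton_subset_iff.2 (self_mem_quotients L))
    rw [hM, Set.ncard_sdiff hsub, Set.ncard_pair hne.symm, Set.ncard_def, hL, ENat.toNat_natCast]
  have hMfin : M.Finite := hfin.sdiff
  have hcover : quotients (lrev L) ⊆
      (fun T : Set (Set (List α)) => {x | leftQuot L x.reverse ∈ T}) ''
        insert ∅ (insert L '' 𝒫 M) := by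
    rintro _ ⟨w, rfl⟩
    refine ⟨{q ∈ quotients L | w.reverse ∈ q}, ?_, (leftQuot_lrev L w).symm⟩
    by_cases hw : w.reverse ∈ L
    · refine Or.inr ⟨{q ∈ M | w.reverse ∈ q}, fun q hq => hq.1, ?_⟩
      ext q
      have h_self := self_mem_quotients L
      simp only [hM, Set.mem_insert_iff, Set.mem_ofPred_eq, Set.mem_sdiff, Set.mem_singleton_iff]
      constructor
      · rintro (rfl | ⟨⟨hq, -⟩, hwq⟩)
        · exact ⟨h_self, hw⟩
        · exact ⟨hq, hwq⟩
      · rintro ⟨hq, hwq⟩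
        by_cases hqL : q = L
        · exact Or.inl hqL
        · refine Or.inr ⟨⟨hq, ?_⟩, hwq⟩
          rintro (rfl | h)
          · exact hwq
          · exact hqL h
    · refine Or.inl (Set.eq_empty_of_forall_notMem ?_)
      rintro _ ⟨⟨u, rfl⟩, hu⟩
      exact hw (leftQuot_subset hLcl u hu)
  have hpow : (𝒫 M).encard = ((2 ^ (n - 2) : ℕ) : ℕ∞) := by
    rw [← hMfin.powerset.cast_ncard_eq, Set.ncard_powerset M hMfin, hMcard]
  calc (quotients (lrev L)).encard
      ≤ (insert ∅ (insert L '' 𝒫 M)).encard :=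
        (Set.encard_le_encard hcover).trans (Set.encard_image_le _ _)
    _ ≤ (insert L '' 𝒫 M).encard + 1 := Set.encard_insert_le _ _
    _ ≤ (𝒫 M).encard + 1 := add_le_add (Set.encard_image_le _ _) le_rfl
    _ = ((2 ^ (n - 2) + 1 : ℕ) : ℕ∞) := by rw [hpow]; push_cast; rfl
end

section
/- Let L be a prefix-closed language over an alphabet Σ with L ≠ Σ*. Then the complement Lᶜ satisfies (Lᶜ)⁺ = Lᶜ; moreover, L⁺ is prefix-closed and ((L⁺)ᶜ)⁺ = (L⁺)ᶜ. Consequently, repeated application of positive closure and complement to L produces at most the four languages L, Lᶜ, L⁺, (L⁺)ᶜ. -/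
/-!
A language `S` satisfies `S⁺ = S` as soon as it is closed under concatenation (`lplus_eq_self`).
The complement of a prefix-closed language is a right ideal, i.e. stable under appending arbitrary
words, so it is closed under concatenation and equals its own positive closure. Any `L⁺` is closed
under concatenation too, whence `L⁺⁺ = L⁺`. Finally `L⁺` inherits prefix-closedness from `L`: a
prefix of a product of words of `L` is a product of some of the initial factors followed by
a prefix of the next one. Hence the complement of `L⁺` is a right ideal too, and the four languages are
stable under both operations.
-/

open List

/-- Positive closure of a language: union of all powers `L ^ i`, `i ≥ 1`. -/
def lplus {α : Type*} (L : Set (List α)) : Set (List α) :=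
  ⋃ i ∈ {i : ℕ | 1 ≤ i}, lpow L i

theorem mem_lplus {α : Type*} {L : Set (List α)} {w : List α} :
    w ∈ lplus L ↔ ∃ n, w ∈ lpow L (n + 1) := by
  simp only [lplus, Set.mem_iUnion, Set.mem_ofPred_eq, exists_prop]
  constructor
  · rintro ⟨i, hi, hw⟩
    exact ⟨i - 1, by rwa [Nat.sub_add_cancel hi]⟩
  · rintro ⟨n, hw⟩
    exact ⟨n + 1, by omega, hw⟩

theorem subset_lplus {α : Type*} (L : Set (List α)) : L ⊆ lplus L := fun w hw =>
  mem_lplus.2 ⟨0, w, hw, [], rfl, by simp⟩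

theorem lplus_eq_self {α : Type*} {S : Set (List α)}
    (h : ∀ u ∈ S, ∀ v ∈ S, u ++ v ∈ S) : lplus S = S := by
  refine Set.Subset.antisymm (fun w hw => ?_) (subset_lplus S)
  obtain ⟨n, hn⟩ := mem_lplus.1 hw
  clear hw
  induction n generalizing w with
  | zero =>
    obtain ⟨u, hu, v, rfl, rfl⟩ := hn
    simpa using hu
  | succ n ih =>
    obtain ⟨u, hu, v, hv, rfl⟩ := hn
    exact h u hu v (ih v hv)

theorem append_mem_lpow {α : Type*} {L : Set (List α)} {m n : ℕ} {u v : List α}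
    (hu : u ∈ lpow L m) (hv : v ∈ lpow L n) : u ++ v ∈ lpow L (m + n) := by
  induction m generalizing u with
  | zero =>
    obtain rfl : u = [] := hu
    simpa using hv
  | succ m ih =>
    obtain ⟨a, ha, b, hb, rfl⟩ := hu
    rw [Nat.succ_add]
    exact ⟨a, ha, b ++ v, ih hb, by simp⟩

theorem append_mem_lplus {α : Type*} {L : Set (List α)} {u v : List α}
    (hu : u ∈ lplus L) (hv : v ∈ lplus L) : u ++ v ∈ lplus L := by
  obtain ⟨m, hm⟩ := mem_lplus.1 hu
  obtain ⟨n, hn⟩ := mem_lplus.1 hv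
  exact mem_lplus.2 ⟨m + 1 + n, append_mem_lpow (m := m + 1) (n := n + 1) hm hn⟩

theorem lplus_compl_eq {α : Type*} {L : Set (List α)} (hL : IsPrefixClosed L) :
    lplus Lᶜ = Lᶜ :=
  lplus_eq_self fun u hu v _ huv => hu (hL _ huv u (List.prefix_append u v))

theorem isPrefixClosed_lplus {α : Type*} {L : Set (List α)} (hL : IsPrefixClosed L) :
    IsPrefixClosed (lplus L) := by
  intro w hw p hp
  obtain ⟨n, hn⟩ := mem_lplus.1 hw
  clear hw
  induction n generalizing w p with
  | zero =>
    obtain ⟨u, hu, v, rfl, rfl⟩ := hn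
    exact subset_lplus L (hL u hu p (by simpa using hp))
  | succ n ih =>
    obtain ⟨u, hu, v, hv, rfl⟩ := hn
    -- `p` either stops inside the first factor `u` or is `u` followed by a prefix of `v`.
    rcases List.prefix_or_prefix_of_prefix hp (List.prefix_append u v) with h | ⟨q, rfl⟩
    · exact subset_lplus L (hL u hu p h)
    · have hq : q <+: v := (List.prefix_append_right_inj u).1 hp
      exact append_mem_lplus (subset_lplus L hu) (ih v q hq hv)

theorem prefix_closed_kuratowski_plus {α : Type*} (L : Set (List α))
    (hLcl : IsPrefixClosed L) (hne : L ≠ Set.univ) :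
    lplus Lᶜ = Lᶜ ∧ IsPrefixClosed (lplus L) ∧ lplus ((lplus L)ᶜ) = (lplus L)ᶜ ∧
      (∀ M ∈ ({L, Lᶜ, lplus L, (lplus L)ᶜ} : Set (Set (List α))),
        Mᶜ ∈ ({L, Lᶜ, lplus L, (lplus L)ᶜ} : Set (Set (List α))) ∧
          lplus M ∈ ({L, Lᶜ, lplus L, (lplus L)ᶜ} : Set (Set (List α)))) := by
  have h1 := lplus_compl_eq hLcl
  have h2 := isPrefixClosed_lplus hLcl
  have h3 := lplus_compl_eq h2
  have h4 : lplus (lplus L) = lplus L :=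
    lplus_eq_self fun _ hu _ hv => append_mem_lplus hu hv
  refine ⟨h1, h2, h3, ?_⟩
  rintro M (rfl | rfl | rfl | rfl)
  · simp
  · simp [h1]
  · simp [h4]
  · simp [h3]
end
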